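/- Let n ≥ 1 and let r > 0 be real. Let A, A₁, A₂ : ℂ → Matrix (Fin n) (Fin n) ℂ be matrix-valued functions such that every entry of A₁ and of A₂ is analytic on the disk {z : |z| < r}, det A₁(0) ≠ 0 and det A₂(0) ≠ 0. Let v₁ ≥ v₂ ≥ … ≥ v_n be integers such that for all complex t with 0 < |t| < r one has A(t) = A₁(t) · diag(t^{v₁}, …, t^{v_n}) · A₂(t). For each real t ∈ (0, r), let d₁(t) ≤ d₂(t) ≤ … ≤ d_n(t) denote the singular values of A(t) ordered nondecreasingly. Then for every index i, log(dᵢ(t))/log(t) → vᵢ as real t → 0⁺. -/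

import Mathlib

/-!
The proof shows that `dᵢ(t)²` and `t^{2vᵢ}` agree up to a multiplicative constant which is uniform
in `t` near `0`; taking logarithms and dividing by `log t → -∞` then gives the limit.

The comparison is a Courant–Fischer type dimension count (`le_of_form_le`). If two diagonal
quadratic forms `∑ pᵢ|yᵢ|²` and `∑ qᵢ|zᵢ|²` with nondecreasing coefficients satisfy
`p(y) ≤ K q(L y)` for a matrix `L` with `‖L y‖² ≤ K'‖y‖²`, then `p_k ≤ K K' q_k` for all `k`:
it suffices to test on some `y ≠ 0` with `yᵢ = 0` for `i < k` and `(L y)ᵢ = 0` for `i > k`.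
The spectral theorem provides a unitary `U` with `‖A U y‖² = ∑ dᵢ²|yᵢ|²`
(`exists_unitary_diag`), and `‖A₁⁻¹ A A₂⁻¹ z‖² = ∑ t^{2vᵢ}|zᵢ|²`. Hence the lemma applies in both
directions, with `L = A₂ U` and with `L = Uᴴ A₂⁻¹`. The constants are Frobenius norms of `A₁`, `A₂`
and their inverses, which stay bounded near `0` because these matrices are continuous at `0`.
-/

open Filter Topology Matrix Polynomial

/-- The squared Euclidean norm of a complex vector. -/
noncomputable def normSqVec {n : ℕ} (x : Fin n → ℂ) : ℝ := ∑ i, ‖x i‖ ^ 2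

/-- The squared Frobenius norm of a complex matrix. -/
noncomputable def frobSq {n : ℕ} (B : Matrix (Fin n) (Fin n) ℂ) : ℝ := ∑ i, ∑ j, ‖B i j‖ ^ 2

lemma normSqVec_nonneg {n : ℕ} (x : Fin n → ℂ) : 0 ≤ normSqVec x :=
  Finset.sum_nonneg fun _ _ => by positivity

lemma normSqVec_pos {n : ℕ} {x : Fin n → ℂ} (hx : x ≠ 0) : 0 < normSqVec x := by
  obtain ⟨i, hi⟩ := Function.ne_iff.mp hx
  refine Finset.sum_pos' (fun _ _ => by positivity) ⟨i, Finset.mem_univ _, ?_⟩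
  have : 0 < ‖x i‖ := norm_pos_iff.mpr hi
  positivity

lemma normSqVec_eq_dotProduct {n : ℕ} (x : Fin n → ℂ) :
    ((normSqVec x : ℝ) : ℂ) = star x ⬝ᵥ x := by
  simp only [normSqVec, dotProduct, Complex.ofReal_sum, Pi.star_apply]
  refine Finset.sum_congr rfl fun i _ => ?_
  rw [← starRingEnd_apply, ← Complex.normSq_eq_conj_mul_self, Complex.normSq_eq_norm_sq]

lemma normSqVec_mulVec_le {n : ℕ} (B : Matrix (Fin n) (Fin n) ℂ) (x : Fin n → ℂ) :
    normSqVec (B *ᵥ x) ≤ frobSq B * normSqVec x := by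
  unfold normSqVec frobSq
  rw [Finset.sum_mul]
  refine Finset.sum_le_sum fun i _ => ?_
  calc ‖(B *ᵥ x) i‖ ^ 2 ≤ (∑ j, ‖B i j‖ * ‖x j‖) ^ 2 := by
        gcongr
        refine (norm_sum_le Finset.univ fun j => B i j * x j).trans (Finset.sum_le_sum fun j _ => ?_)
        rw [norm_mul]
    _ ≤ _ := Finset.sum_mul_sq_le_sq_mul_sq _ _ _

/-- If `NᴴN = diag(e)` then `‖N y‖² = ∑ eᵢ|yᵢ|²`. -/
lemma normSqVec_mulVec_of_diag {n : ℕ} (N : Matrix (Fin n) (Fin n) ℂ) (e : Fin n → ℝ)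
    (h : Nᴴ * N = Matrix.diagonal (fun i => (e i : ℂ))) (y : Fin n → ℂ) :
    normSqVec (N *ᵥ y) = ∑ i, e i * ‖y i‖ ^ 2 := by
  have : ((normSqVec (N *ᵥ y) : ℝ) : ℂ) = ((∑ i, e i * ‖y i‖ ^ 2 : ℝ) : ℂ) := by
    rw [normSqVec_eq_dotProduct, star_mulVec, ← dotProduct_mulVec, mulVec_mulVec, h]
    simp only [dotProduct, Complex.ofReal_sum, Pi.star_apply, mulVec_diagonal]
    refine Finset.sum_congr rfl fun i _ => ?_
    rw [mul_left_comm, ← starRingEnd_apply, ← Complex.normSq_eq_conj_mul_self,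
      Complex.normSq_eq_norm_sq]
    push_cast
    ring
  exact_mod_cast this

lemma normSqVec_mulVec_of_isometry {n : ℕ} (N : Matrix (Fin n) (Fin n) ℂ)
    (h : Nᴴ * N = 1) (y : Fin n → ℂ) : normSqVec (N *ᵥ y) = normSqVec y := by
  rw [normSqVec_mulVec_of_diag N (fun _ => 1) (by simpa using h)]
  simp [normSqVec]

/-- The conditions `yᵢ = 0` for `i < k` and `(L y)ᵢ = 0` for `i > k` are `n - 1` linear equations
in `n` unknowns. -/
lemma exists_ne_zero_vanishing {n : ℕ} (L : Matrix (Fin n) (Fin n) ℂ) (k : Fin n) :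
    ∃ y : Fin n → ℂ, y ≠ 0 ∧ (∀ i, i < k → y i = 0) ∧ (∀ i, k < i → (L *ᵥ y) i = 0) := by
  let φ : (Fin n → ℂ) →ₗ[ℂ] ({i : Fin n // i ≠ k} → ℂ) :=
    LinearMap.pi fun i => if i.1 < k then LinearMap.proj i.1 else
      (LinearMap.proj i.1) ∘ₗ L.mulVecLin
  have hlt : Module.finrank ℂ ({i : Fin n // i ≠ k} → ℂ) < Module.finrank ℂ (Fin n → ℂ) := by
    rw [Module.finrank_fintype_fun_eq_card, Module.finrank_fintype_fun_eq_card]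
    exact Fintype.card_subtype_lt (x := k) (by simp)
  obtain ⟨y, hy, hy0⟩ := (Submodule.ne_bot_iff _).mp (LinearMap.ker_ne_bot_of_finrank_lt (f := φ) hlt)
  refine ⟨y, hy0, fun i hi => ?_, fun i hi => ?_⟩
  · have := congrFun (LinearMap.mem_ker.mp hy) ⟨i, hi.ne⟩
    simpa [φ, hi] using this
  · have := congrFun (LinearMap.mem_ker.mp hy) ⟨i, hi.ne'⟩
    simpa [φ, hi.not_gt] using this

/-- Comparison of the coefficients of two diagonal quadratic forms, one dominated by the pullback
of the other along `L`. -/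
lemma le_of_form_le {n : ℕ} {p q : Fin n → ℝ} (hp : Monotone p) (hq : Monotone q)
    {K K' : ℝ} (hK : 0 ≤ K) (hq0 : ∀ i, 0 ≤ q i) (L : Matrix (Fin n) (Fin n) ℂ)
    (hL : ∀ y, normSqVec (L *ᵥ y) ≤ K' * normSqVec y)
    (hpq : ∀ y, ∑ i, p i * ‖y i‖ ^ 2 ≤ K * ∑ i, q i * ‖(L *ᵥ y) i‖ ^ 2) (k : Fin n) :
    p k ≤ K * K' * q k := by
  obtain ⟨y, hy0, hlo, hhi⟩ := exists_ne_zero_vanishing L k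
  have hpos := normSqVec_pos hy0
  refine le_of_mul_le_mul_right ?_ hpos
  calc p k * normSqVec y ≤ ∑ i, p i * ‖y i‖ ^ 2 := by
        rw [normSqVec, Finset.mul_sum]
        refine Finset.sum_le_sum fun i _ => ?_
        rcases lt_or_ge i k with h | h
        · simp [hlo i h]
        · exact mul_le_mul_of_nonneg_right (hp h) (by positivity)
    _ ≤ K * ∑ i, q i * ‖(L *ᵥ y) i‖ ^ 2 := hpq y
    _ ≤ K * (q k * normSqVec (L *ᵥ y)) := by
        refine mul_le_mul_of_nonneg_left ?_ hK
        rw [normSqVec, Finset.mul_sum]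
        refine Finset.sum_le_sum fun i _ => ?_
        rcases lt_or_ge k i with h | h
        · simp [hhi i h]
        · exact mul_le_mul_of_nonneg_right (hq h) (by positivity)
    _ ≤ K * (q k * (K' * normSqVec y)) :=
        mul_le_mul_of_nonneg_left (mul_le_mul_of_nonneg_left (hL y) (hq0 k)) hK
    _ = K * K' * q k * normSqVec y := by ring

/-- Unitary diagonalization of a Hermitian matrix, with the eigenvalues in nondecreasing order. -/
lemma exists_unitary_diag {n : ℕ} {H : Matrix (Fin n) (Fin n) ℂ} (hH : H.IsHermitian)
    (e : Fin n → ℝ) (hmono : Monotone e)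
    (he : H.charpoly = ∏ i, (Polynomial.X - Polynomial.C ((e i : ℝ) : ℂ))) :
    ∃ U : Matrix (Fin n) (Fin n) ℂ, Uᴴ * U = 1 ∧ U * Uᴴ = 1 ∧
      Uᴴ * H * U = Matrix.diagonal (fun i => (e i : ℂ)) := by
  have hroots : Finset.univ.val.map e = Finset.univ.val.map hH.eigenvalues := by
    have h1 := hH.roots_charpoly_eq_eigenvalues
    rw [he, Polynomial.roots_prod _ _ (by simp [Finset.prod_ne_zero_iff, X_sub_C_ne_zero])] at h1
    simp only [Polynomial.roots_X_sub_C, Multiset.bind_singleton] at h1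
    have h2 := congrArg (Multiset.map Complex.re) h1
    simpa [Multiset.map_map, Function.comp_def] using h2
  let σ := Tuple.sort hH.eigenvalues
  have hσ : e = hH.eigenvalues ∘ σ := by
    rw [← List.ofFn_inj]
    refine List.Perm.eq_of_sortedLE hmono.sortedLE_ofFn
      (Tuple.monotone_sort hH.eigenvalues).sortedLE_ofFn ?_
    refine List.Perm.trans ?_ (Equiv.Perm.ofFn_comp_perm σ hH.eigenvalues).symm
    rw [← Multiset.coe_eq_coe]
    simpa [Fin.univ_val_map] using hroots
  let V : Matrix (Fin n) (Fin n) ℂ := hH.eigenvectorUnitary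
  have hV1 : Vᴴ * V = 1 := Unitary.coe_star_mul_self hH.eigenvectorUnitary
  have hV2 : V * Vᴴ = 1 := Unitary.coe_mul_star_self hH.eigenvectorUnitary
  have hV3 : Vᴴ * H * V = Matrix.diagonal (fun i => (hH.eigenvalues i : ℂ)) := by
    have := hH.conjStarAlgAut_star_eigenvectorUnitary
    rw [Unitary.conjStarAlgAut_star_apply] at this
    exact this
  refine ⟨V.submatrix id σ, ?_, ?_, ?_⟩
  · rw [conjTranspose_submatrix, ← submatrix_mul _ _ _ _ _ Function.bijective_id, hV1,
      submatrix_one_equiv]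
  · rw [conjTranspose_submatrix, submatrix_mul_equiv, hV2, submatrix_id_id]
  · have : (V.submatrix id σ)ᴴ * H * V.submatrix id σ = (Vᴴ * H * V).submatrix σ σ := by
      ext i j
      simp [Matrix.mul_apply]
    rw [this, hV3, submatrix_diagonal_equiv, hσ]
    rfl

/-- Two-sided comparison of the squared singular values of `B₁ * diag(w) * B₂` with `w²`. -/
lemma sq_singularValues_comparable {n : ℕ} (M B₁ B₂ : Matrix (Fin n) (Fin n) ℂ) (w : Fin n → ℝ)
    (hw : Monotone fun i => w i ^ 2) (e : Fin n → ℝ) (he : Monotone e) (he0 : ∀ i, 0 ≤ e i)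
    (hM : M = B₁ * Matrix.diagonal (fun i => (w i : ℂ)) * B₂)
    (hB₁ : IsUnit B₁.det) (hB₂ : IsUnit B₂.det)
    (hch : (Mᴴ * M).charpoly = ∏ i, (Polynomial.X - Polynomial.C ((e i : ℝ) : ℂ)))
    {K : ℝ} (hK : 0 ≤ K) (h₁ : frobSq B₁ ≤ K) (h₂ : frobSq B₂ ≤ K) (h₁' : frobSq B₁⁻¹ ≤ K)
    (h₂' : frobSq B₂⁻¹ ≤ K) (k : Fin n) :
    e k ≤ K * K * w k ^ 2 ∧ w k ^ 2 ≤ K * K * e k := by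
  have hbd : ∀ {B : Matrix (Fin n) (Fin n) ℂ}, frobSq B ≤ K → ∀ x,
      normSqVec (B *ᵥ x) ≤ K * normSqVec x := fun hB x =>
    (normSqVec_mulVec_le _ x).trans (mul_le_mul_of_nonneg_right hB (normSqVec_nonneg x))
  obtain ⟨U, hU1, hU2, hU3⟩ := exists_unitary_diag (isHermitian_conjTranspose_mul_self M) e he hch
  have hMU : ∀ y, normSqVec ((M * U) *ᵥ y) = ∑ i, e i * ‖y i‖ ^ 2 :=
    normSqVec_mulVec_of_diag (M * U) e (by
      rw [← hU3, conjTranspose_mul]; simp only [Matrix.mul_assoc])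
  have hD : ∀ y, normSqVec (Matrix.diagonal (fun i => (w i : ℂ)) *ᵥ y)
      = ∑ i, w i ^ 2 * ‖y i‖ ^ 2 :=
    normSqVec_mulVec_of_diag _ (fun i => w i ^ 2) (by
      rw [diagonal_conjTranspose, diagonal_mul_diagonal]
      congr 1
      ext i
      simp [sq])
  have hUi := normSqVec_mulVec_of_isometry U hU1
  have hUi' := normSqVec_mulVec_of_isometry Uᴴ (by rw [conjTranspose_conjTranspose, hU2])
  constructor
  · refine le_of_form_le he hw hK (fun i => sq_nonneg _) (B₂ * U) (fun y => ?_) (fun y => ?_) k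
    · rw [← mulVec_mulVec, ← hUi y]
      exact hbd h₂ _
    · rw [← hMU, ← hD, hM]
      have : (B₁ * Matrix.diagonal (fun i => (w i : ℂ)) * B₂ * U) *ᵥ y =
          B₁ *ᵥ (Matrix.diagonal (fun i => (w i : ℂ)) *ᵥ ((B₂ * U) *ᵥ y)) := by
        simp only [mulVec_mulVec, Matrix.mul_assoc]
      rw [this]
      exact hbd h₁ _
  · refine le_of_form_le hw he hK he0 (Uᴴ * B₂⁻¹) (fun y => ?_) (fun y => ?_) k
    · rw [← mulVec_mulVec, hUi']
      exact hbd h₂' _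
    · rw [← hMU, ← hD]
      have : Matrix.diagonal (fun i => (w i : ℂ)) *ᵥ y =
          B₁⁻¹ *ᵥ ((M * U) *ᵥ ((Uᴴ * B₂⁻¹) *ᵥ y)) := by
        simp only [mulVec_mulVec]
        congr 1
        calc Matrix.diagonal (fun i => (w i : ℂ))
            = (B₁⁻¹ * B₁) * Matrix.diagonal (fun i => (w i : ℂ)) * (B₂ * (U * Uᴴ) * B₂⁻¹) := by
              rw [hU2, Matrix.mul_one, Matrix.nonsing_inv_mul _ hB₁, Matrix.mul_nonsing_inv _ hB₂,
                Matrix.one_mul, Matrix.mul_one]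
          _ = _ := by rw [hM]; simp only [Matrix.mul_assoc]
      rw [this]
      exact hbd h₁' _

lemma continuous_frobSq {n : ℕ} : Continuous (frobSq (n := n)) := by
  unfold frobSq
  fun_prop

/-- A matrix function continuous at `0` and invertible there stays invertible near `0`, and it and
its inverse stay bounded. -/
lemma eventually_frobSq_bounds {n : ℕ} {B : ℂ → Matrix (Fin n) (Fin n) ℂ}
    (hB : ContinuousAt B 0) (hdet : (B 0).det ≠ 0) :
    ∀ᶠ z in 𝓝 (0 : ℂ), IsUnit (B z).det ∧ frobSq (B z) ≤ frobSq (B 0) + 1 ∧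
      frobSq (B z)⁻¹ ≤ frobSq (B 0)⁻¹ + 1 := by
  have hd : ContinuousAt (fun z => (B z).det) 0 :=
    (continuous_id.matrix_det.continuousAt (x := B 0)).comp hB
  have hinv : ContinuousAt (fun z => (B z)⁻¹) 0 := by
    refine ContinuousAt.comp (g := Inv.inv) (continuousAt_matrix_inv (B 0) ?_) hB
    rw [Ring.inverse_eq_inv']
    exact continuousAt_inv₀ hdet
  have h1 : ContinuousAt (fun z => frobSq (B z)) 0 := continuous_frobSq.continuousAt.comp hB
  have h2 : ContinuousAt (fun z => frobSq (B z)⁻¹) 0 := continuous_frobSq.continuousAt.comp hinv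
  filter_upwards [hd.eventually_ne hdet, h1.eventually_le_const (lt_add_one _),
    h2.eventually_le_const (lt_add_one _)] with z hz hz1 hz2
  exact ⟨isUnit_iff_ne_zero.mpr hz, hz1, hz2⟩

/-- If `f(t)²` is comparable to `t^{2m}` as `t → 0⁺`, then `log f(t) / log t → m`. -/
lemma tendsto_log_div_log {f : ℝ → ℝ} {m : ℤ} {C : ℝ} (hC : 0 < C)
    (h : ∀ᶠ t in 𝓝[>] (0 : ℝ), 0 ≤ f t ∧ f t ^ 2 ≤ C * (t ^ m) ^ 2 ∧ (t ^ m) ^ 2 ≤ C * f t ^ 2) :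
    Tendsto (fun t : ℝ => Real.log (f t) / Real.log t) (𝓝[>] (0 : ℝ)) (𝓝 (m : ℝ)) := by
  have hlim : Tendsto (fun t : ℝ => |Real.log C| * |Real.log t|⁻¹) (𝓝[>] (0 : ℝ)) (𝓝 0) := by
    have := (tendsto_abs_atBot_atTop.comp Real.tendsto_log_nhdsGT_zero).inv_tendsto_atTop
    simpa using this.const_mul |Real.log C|
  rw [tendsto_iff_norm_sub_tendsto_zero]
  refine squeeze_zero' (Eventually.of_forall fun _ => norm_nonneg _) ?_ hlim
  filter_upwards [h, Ioo_mem_nhdsGT (zero_lt_one' ℝ)] with t ⟨h0, hle, hge⟩ ht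
  have htm : 0 < t ^ m := zpow_pos ht.1 m
  have hf : 0 < f t := by
    refine h0.lt_of_ne fun h => ?_
    rw [← h] at hge
    nlinarith [pow_pos htm 2]
  have hlog : Real.log t < 0 := Real.log_neg ht.1 ht.2
  have e1 := Real.log_le_log (by positivity) hle
  have e2 := Real.log_le_log (by positivity) hge
  rw [Real.log_mul (by positivity) (by positivity), Real.log_pow, Real.log_pow,
    Real.log_zpow] at e1 e2
  push_cast at e1 e2
  have habs : |Real.log (f t) - m * Real.log t| ≤ |Real.log C| := by
    have := le_abs_self (Real.log C)
    have := abs_nonneg (Real.log C)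
    rw [abs_le]
    constructor <;> linarith
  have : Real.log (f t) / Real.log t - m
      = (Real.log (f t) - m * Real.log t) / Real.log t := by
    field_simp [hlog.ne]
  rw [this, Real.norm_eq_abs, abs_div, div_eq_mul_inv]
  gcongr

/-- **Singular values versus invariant factors.**
Let `A(t) = A₁(t) · diag(t^{v₁}, …, t^{vₙ}) · A₂(t)` for `0 < |t| < r`, where the entries of
`A₁, A₂` are analytic on the disk of radius `r` and `det A₁(0) ≠ 0`, `det A₂(0) ≠ 0`, and
`v₁ ≥ v₂ ≥ … ≥ vₙ` are integers.  If for each real `t ∈ (0, r)` the reals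
`d₁(t) ≤ … ≤ dₙ(t)` are the nondecreasingly ordered singular values of `A(t)`, then for every
index `i` one has `log(dᵢ(t))/log(t) → vᵢ` as real `t → 0⁺`. -/
theorem singularValues_tendsto_invariantFactors
    (n : ℕ) (hn : 1 ≤ n) (r : ℝ) (hr : 0 < r)
    (A A₁ A₂ : ℂ → Matrix (Fin n) (Fin n) ℂ)
    (hA₁ : ∀ i j, AnalyticOnNhd ℂ (fun z => A₁ z i j) (Metric.ball 0 r))
    (hA₂ : ∀ i j, AnalyticOnNhd ℂ (fun z => A₂ z i j) (Metric.ball 0 r))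
    (hdet₁ : (A₁ 0).det ≠ 0) (hdet₂ : (A₂ 0).det ≠ 0)
    (v : Fin n → ℤ) (hv : Antitone v)
    (hfac : ∀ t : ℂ, 0 < ‖t‖ → ‖t‖ < r →
      A t = A₁ t * Matrix.diagonal (fun i => t ^ (v i)) * A₂ t)
    (d : ℝ → Fin n → ℝ)
    (hd_nonneg : ∀ t ∈ Set.Ioo (0 : ℝ) r, ∀ i, 0 ≤ d t i)
    (hd_mono : ∀ t ∈ Set.Ioo (0 : ℝ) r, Monotone (d t))
    (hd_sv : ∀ t ∈ Set.Ioo (0 : ℝ) r,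
      Matrix.charpoly ((A (t : ℂ))ᴴ * A (t : ℂ)) =
        ∏ i, (Polynomial.X - Polynomial.C ((((d t i) ^ 2 : ℝ) : ℂ)))) :
    ∀ i, Tendsto (fun t : ℝ => Real.log (d t i) / Real.log t)
      (𝓝[>] (0 : ℝ)) (𝓝 ((v i : ℝ))) := by
  intro k
  have hcont : ∀ {B : ℂ → Matrix (Fin n) (Fin n) ℂ},
      (∀ i j, AnalyticOnNhd ℂ (fun z => B z i j) (Metric.ball 0 r)) → ContinuousAt B 0 :=
    fun hB => continuousAt_pi.mpr fun i => continuousAt_pi.mpr fun j =>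
      (hB i j 0 (Metric.mem_ball_self hr)).continuousAt
  have hfrob : ∀ B : Matrix (Fin n) (Fin n) ℂ, 0 ≤ frobSq B := fun B =>
    Finset.sum_nonneg fun _ _ => Finset.sum_nonneg fun _ _ => by positivity
  -- A single constant exceeding all four Frobenius bounds near `0`.
  obtain ⟨K, hKdef⟩ : ∃ K, K = frobSq (A₁ 0) + frobSq (A₂ 0) + frobSq (A₁ 0)⁻¹ +
    frobSq (A₂ 0)⁻¹ + 1 := ⟨_, rfl⟩
  have p1 := hfrob (A₁ 0)
  have p2 := hfrob (A₂ 0)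
  have p3 := hfrob (A₁ 0)⁻¹
  have p4 := hfrob (A₂ 0)⁻¹
  have hK : 0 < K := by linarith
  refine tendsto_log_div_log (mul_pos hK hK) ?_
  have hcoe : Tendsto (fun t : ℝ => (t : ℂ)) (𝓝[>] (0 : ℝ)) (𝓝 (0 : ℂ)) :=
    (Complex.continuous_ofReal.tendsto' 0 0 Complex.ofReal_zero).mono_left nhdsWithin_le_nhds
  filter_upwards [hcoe.eventually (eventually_frobSq_bounds (hcont hA₁) hdet₁),
    hcoe.eventually (eventually_frobSq_bounds (hcont hA₂) hdet₂), Ioo_mem_nhdsGT hr,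
    Ioo_mem_nhdsGT (zero_lt_one' ℝ)] with t ⟨hu₁, hb₁, hb₁'⟩ ⟨hu₂, hb₂, hb₂'⟩ htr ht1
  have hnorm : ‖(t : ℂ)‖ = t := by rw [Complex.norm_real, Real.norm_of_nonneg htr.1.le]
  have hM := hfac t (by rw [hnorm]; exact htr.1) (by rw [hnorm]; exact htr.2)
  refine ⟨hd_nonneg t htr k, ?_⟩
  refine sq_singularValues_comparable (A t) (A₁ t) (A₂ t) (fun i => t ^ v i) (fun i j hij => ?_)
    (fun i => d t i ^ 2) (fun i j hij => ?_) (fun i => sq_nonneg _) (by simpa using hM) hu₁ hu₂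
    (hd_sv t htr) hK.le (by linarith) (by linarith) (by linarith) (by linarith) k
  · exact pow_le_pow_left₀ (zpow_pos ht1.1 _).le
      (zpow_le_zpow_right_of_le_one₀ ht1.1 ht1.2.le (hv hij)) 2
  · exact pow_le_pow_left₀ (hd_nonneg t htr i) (hd_mono t htr hij) 2
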